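/- Let K be a compact Hausdorff space and M ⊆ K a closed subset such that K ∖ M = ⋃_{n=1}^∞ H_n, where each H_n is open in its closure cl(H_n) and every point of H_n has a local base of connected sets relative to cl(H_n). If M (as a compact Hausdorff space with the subspace topology) has the Bishop property (B), then K has the Bishop property (B). -/

import Mathlib

open Set Topology Filter

/-- `f ≺ g`: `f ≠ g` and `f` agrees with `g` on the support of `f` (the closure of
the set where `f` is nonzero). -/
def Prec {K : Type*} [TopologicalSpace K] (f g : C(K, ℝ)) : Prop :=
  f ≠ g ∧ ∀ t ∈ closure {t | f t ≠ 0}, f t = g t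

/-- `f ≺_δ g`: `f ≺ g` and `‖f - g‖ ≥ δ`. -/
def PrecDelta {K : Type*} [TopologicalSpace K] [CompactSpace K] (δ : ℝ) (f g : C(K, ℝ)) : Prop :=
  Prec f g ∧ δ ≤ ‖f - g‖

/-- `F` is a `δ`-`≺`-chain. -/
def IsPrecChain {K : Type*} [TopologicalSpace K] [CompactSpace K] (δ : ℝ)
    (F : Set C(K, ℝ)) : Prop :=
  ∀ f ∈ F, ∀ g ∈ F, f ≠ g → PrecDelta δ f g ∨ PrecDelta δ g f

/-- A compact Hausdorff space has the Bishop property (B) if for every `δ > 0`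
every `δ`-`≺`-chain in `C(K)` is countable. -/
def HasBishop (K : Type*) [TopologicalSpace K] [CompactSpace K] [T2Space K] : Prop :=
  ∀ δ : ℝ, 0 < δ → ∀ F : Set C(K, ℝ), IsPrecChain δ F → F.Countable

/-- `t ∈ M` has a local base of connected sets relative to `M`: for every set `U`
open in `M` (with its subspace topology) containing `t`, there is a connected set `V`,
open in `M`, with `t ∈ V ⊆ U`. -/
def HasConnBase {K : Type*} [TopologicalSpace K] (M : Set K) (t : K) (ht : t ∈ M) : Prop :=
  ∀ U : Set ↥M, IsOpen U → (⟨t, ht⟩ : ↥M) ∈ U →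
    ∃ V : Set ↥M, IsOpen V ∧ IsConnected V ∧ (⟨t, ht⟩ : ↥M) ∈ V ∧ V ⊆ U

/-- The domain of `φ` is a countable union of locally closed sets `C n ∩ O n` such that the
restriction of `φ` to `C n` is locally constant at the points of `C n ∩ O n`. -/
structure IsSigmaLocallyConstant {A L : Type*} [TopologicalSpace A] (φ : A → L)
    (C O : ℕ → Set A) : Prop where
  isClosed : ∀ n, IsClosed (C n)
  isOpen : ∀ n, IsOpen (O n)
  exists_mem : ∀ t, ∃ n, t ∈ C n ∩ O n
  eventually_eq : ∀ n, ∀ t ∈ C n ∩ O n, ∀ᶠ s in 𝓝[C n] t, φ s = φ t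

theorem IsSigmaLocallyConstant.finite_image {A L : Type*} [TopologicalSpace A] {φ : A → L}
    {C O : ℕ → Set A} (h : IsSigmaLocallyConstant φ C O) {S : Set A} (hS : IsCompact S) {n : ℕ}
    (hSn : S ⊆ C n ∩ O n) : (φ '' S).Finite := by
  refine hS.induction_on (p := fun s => (φ '' s).Finite) (by simp)
    (fun s t hst ht => ht.subset (image_mono hst))
    (fun s t hs ht => by rw [image_union]; exact hs.union ht) fun t ht => ?_
  refine ⟨{s | φ s = φ t}, ?_, (finite_singleton (φ t)).subset ?_⟩
  · exact nhdsWithin_mono t (fun s hs => (hSn hs).1) (h.eventually_eq n t (hSn ht))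
  · rintro _ ⟨s, hs, rfl⟩
    exact hs

/-- If the decreasing sequences of `good` sets all have an intersection meeting `⋃ n, H n`, then
below some `good` set one cannot avoid some fixed `H n`. -/
theorem exists_good_forall_inter_nonempty {A : Type*} (H : ℕ → Set A) (good : Set A → Prop)
    (E₀ : Set A) (h₀ : good E₀)
    (hinter : ∀ E : ℕ → Set A, Antitone E → (∀ n, good (E n)) → ∃ t n, (∀ k, t ∈ E k) ∧ t ∈ H n) :
    ∃ n E, good E ∧ ∀ E' ⊆ E, good E' → (E' ∩ H n).Nonempty := by
  by_contra! hcon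
  choose! next hsub hgood hdisj using hcon
  let E : ℕ → Set A := fun n => Nat.rec E₀ (fun k S => next k S) n
  have hE : ∀ n, good (E n) := by
    intro n
    induction n with
    | zero => exact h₀
    | succ k ih => exact hgood k (E k) ih
  obtain ⟨t, n, ht, htn⟩ := hinter E (antitone_nat_of_succ_le fun n => hsub n (E n) (hE n)) hE
  have hmem : t ∈ next n (E n) ∩ H n := ⟨ht (n + 1), htn⟩
  rw [hdisj n (E n) (hE n)] at hmem
  exact hmem

section LinearOrderValued

variable {A L : Type*} [TopologicalSpace A] [T2Space A] [TopologicalSpace L]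
  {φ : A → L} {C O : ℕ → Set A}

theorem IsSigmaLocallyConstant.countable_image_of_Iic [LinearOrder L] [OrderTopology L]
    (h : IsSigmaLocallyConstant φ C O) (hφ : Continuous φ) {P : Set A}
    (hcomp : ∀ x ∈ P, IsCompact (P ∩ φ ⁻¹' Iic (φ x)))
    (hcount : ∀ x ∈ P, (φ '' (P ∩ φ ⁻¹' Iic (φ x))).Countable) : (φ '' P).Countable := by
  by_contra hunc
  have hbdd : ∀ T ⊆ P, T.Countable → ∃ y ∈ P, ∀ t ∈ T, φ t < φ y := by
    intro T hTP hT
    by_contra! hcon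
    refine hunc ((hT.biUnion fun t ht => hcount t (hTP ht)).mono ?_)
    rintro _ ⟨y, hy, rfl⟩
    obtain ⟨t, ht, hty⟩ := hcon y hy
    exact mem_biUnion ht ⟨y, ⟨hy, hty⟩, rfl⟩
  let big : Set A → Prop := fun E => ∀ x ∈ P, ∃ z ∈ P ∩ E, φ x < φ z
  obtain ⟨n, E, ⟨hEcl, hEbig⟩, hE⟩ := exists_good_forall_inter_nonempty
    (fun n => P ∩ (C n ∩ O n)) (fun E => IsClosed E ∧ big E) univ
    ⟨isClosed_univ, fun x hx => by
      obtain ⟨y, hy, hlt⟩ := hbdd {x} (by simpa using hx) (countable_singleton x)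
      exact ⟨y, ⟨hy, trivial⟩, hlt x rfl⟩⟩ (by
    intro E hanti hE
    obtain ⟨x, hx⟩ : P.Nonempty := by
      by_contra hemp
      exact hunc (by simp [not_nonempty_iff_eq_empty.1 hemp])
    choose z hz hxz using fun n => (hE n).2 x hx
    obtain ⟨y, hy, hzy⟩ := hbdd (range z) (by rintro _ ⟨n, rfl⟩; exact (hz n).1)
      (countable_range z)
    obtain ⟨t, ht⟩ := IsCompact.nonempty_iInter_of_sequence_nonempty_isCompact_isClosed
      (fun n => P ∩ φ ⁻¹' Iic (φ y) ∩ E n)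
      (fun n => inter_subset_inter_right _ (hanti n.le_succ))
      (fun n => ⟨z n, ⟨(hz n).1, (hzy _ ⟨n, rfl⟩).le⟩, (hz n).2⟩)
      ((hcomp y hy).inter_right (hE 0).1)
      (fun n => ((hcomp y hy).inter_right (hE n).1).isClosed)
    rw [mem_iInter] at ht
    obtain ⟨n, hn⟩ := h.exists_mem t
    exact ⟨t, n, fun k => (ht k).2, (ht 0).1.1, hn⟩)
  have hbig : big (E ∩ C n) := by
    by_contra hcon
    simp only [big, not_forall, not_exists, not_and, not_lt] at hcon
    obtain ⟨x, hx, hxC⟩ := hcon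
    obtain ⟨y, ⟨hy, -⟩, hxy⟩ := hEbig x hx
    obtain ⟨t, ⟨htE, hty⟩, htP, htC, -⟩ := hE (E ∩ φ ⁻¹' Ici (φ y)) inter_subset_left
      ⟨hEcl.inter (isClosed_Ici.preimage hφ), fun w hw => by
        rcases le_total (φ w) (φ y) with hwy | hwy
        · obtain ⟨z, hz, hlt⟩ := hEbig y hy
          exact ⟨z, ⟨hz.1, hz.2, hlt.le⟩, hwy.trans_lt hlt⟩
        · obtain ⟨z, hz, hlt⟩ := hEbig w hw
          exact ⟨z, ⟨hz.1, hz.2, hwy.trans hlt.le⟩, hlt⟩⟩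
    exact (hxy.trans_le hty).not_ge (hxC t ⟨htP, htE, htC⟩)
  have hECcl : IsClosed (E ∩ C n) := hEcl.inter (h.isClosed n)
  have hR : ¬ big (E ∩ C n ∩ (O n)ᶜ) := by
    intro hcon
    obtain ⟨t, ⟨-, htO⟩, -, -, htO'⟩ := hE _ (inter_subset_left.trans inter_subset_left)
      ⟨hECcl.inter (h.isOpen n).isClosed_compl, hcon⟩
    exact htO htO'
  simp only [big, not_forall, not_exists, not_and, not_lt] at hR
  obtain ⟨x, hx, hxR⟩ := hR
  obtain ⟨w, ⟨hwP, hwE⟩, hxw⟩ := hbig x hx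
  let W : Set A := P ∩ (E ∩ C n) ∩ φ ⁻¹' Ici (φ w)
  have hWinf : (φ '' W).Infinite := by
    intro hfin
    obtain ⟨m, hm, hmax⟩ := exists_max_image (φ '' W) id hfin ⟨_, w, ⟨⟨hwP, hwE⟩, le_rfl⟩, rfl⟩
    obtain ⟨m, hmW, rfl⟩ := hm
    obtain ⟨z, hz, hlt⟩ := hbig m hmW.1.1
    exact hlt.not_ge (hmax _ ⟨z, ⟨hz, hmW.2.trans hlt.le⟩, rfl⟩)
  let u := hWinf.natEmbedding
  choose v hvW hv using fun k => (u k).2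
  obtain ⟨y, hy, hvy⟩ := hbdd (range v) (by rintro _ ⟨k, rfl⟩; exact (hvW k).1.1)
    (countable_range v)
  have hfin : (φ '' (P ∩ φ ⁻¹' Iic (φ y) ∩ (E ∩ C n ∩ φ ⁻¹' Ici (φ w)))).Finite := by
    refine h.finite_image (n := n)
      ((hcomp y hy).inter_right (hECcl.inter (isClosed_Ici.preimage hφ))) ?_
    rintro t ⟨⟨htP, -⟩, htE, htw⟩
    refine ⟨htE.2, ?_⟩
    by_contra htO
    exact (hxw.trans_le htw).not_ge (hxR t ⟨htP, htE, htO⟩)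
  refine infinite_range_of_injective (f := fun k => (u k : L))
    (Subtype.val_injective.comp u.injective) (hfin.subset ?_)
  rintro _ ⟨k, rfl⟩
  exact ⟨v k, ⟨⟨(hvW k).1.1, (hvy _ ⟨k, rfl⟩).le⟩, (hvW k).1.2, (hvW k).2⟩, hv k⟩

theorem IsSigmaLocallyConstant.countable_image_of_Icc [LinearOrder L] [OrderTopology L]
    (h : IsSigmaLocallyConstant φ C O) (hφ : Continuous φ) {P : Set A}
    (hcomp : ∀ x ∈ P, ∀ y ∈ P, IsCompact (P ∩ φ ⁻¹' Icc (φ x) (φ y)))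
    (hcount : ∀ x ∈ P, ∀ y ∈ P, (φ '' (P ∩ φ ⁻¹' Icc (φ x) (φ y))).Countable) :
    (φ '' P).Countable := by
  rcases P.eq_empty_or_nonempty with rfl | ⟨x, hx⟩
  · simp
  have hup : (φ '' (P ∩ φ ⁻¹' Ici (φ x))).Countable := by
    have heq : ∀ y, P ∩ φ ⁻¹' Ici (φ x) ∩ φ ⁻¹' Iic (φ y) = P ∩ φ ⁻¹' Icc (φ x) (φ y) :=
      fun y => by rw [inter_assoc, ← preimage_inter, Ici_inter_Iic]
    refine h.countable_image_of_Iic hφ (fun y hy => ?_) fun y hy => ?_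
    · rw [heq]
      exact hcomp x hx y hy.1
    · rw [heq]
      exact hcount x hx y hy.1
  have hdown : (φ '' (P ∩ φ ⁻¹' Iic (φ x))).Countable := by
    have heq : ∀ y, P ∩ φ ⁻¹' Iic (φ x) ∩ φ ⁻¹' Ici (φ y) = P ∩ φ ⁻¹' Icc (φ y) (φ x) :=
      fun y => by rw [inter_assoc, ← preimage_inter, inter_comm (Iic _), Ici_inter_Iic]
    refine IsSigmaLocallyConstant.countable_image_of_Iic (L := Lᵒᵈ) (φ := φ)
      ⟨h.isClosed, h.isOpen, h.exists_mem, h.eventually_eq⟩ hφ (fun y hy => ?_) fun y hy => ?_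
    · have := hcomp y hy.1 x hx
      rw [← heq] at this
      exact this
    · have := hcount y hy.1 x hx
      rw [← heq] at this
      exact this
  refine (hup.union hdown).mono ?_
  rintro _ ⟨y, hy, rfl⟩
  rcases le_total (φ x) (φ y) with hxy | hxy
  · exact Or.inl ⟨y, ⟨hy, hxy⟩, rfl⟩
  · exact Or.inr ⟨y, ⟨hy, hxy⟩, rfl⟩

variable [CompleteLinearOrder L] [OrderTopology L]

/-- If the values of `φ` off neighbourhoods of a set with countable image are countable, then so
are all values of `φ`: treat each gap of the countable closed set `φ '' R` separately. -/
theorem IsSigmaLocallyConstant.countable_image_of_disjoint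
    (h : IsSigmaLocallyConstant φ C O) (hφ : Continuous φ) {Z R : Set A} (hZ : IsCompact Z)
    (hR : IsCompact R) (hRcount : (φ '' R).Countable)
    (hdisj : ∀ Y ⊆ Z, IsCompact Y → Disjoint Y R → (φ '' Y).Countable) :
    (φ '' Z).Countable := by
  let gap : L → L := fun x => sSup (φ '' R ∩ Iio x)
  have hgap_mono : Monotone gap := fun x y hxy =>
    sSup_le_sSup (inter_subset_inter_right _ (Iio_subset_Iio hxy))
  have hgap_mem : ∀ x, gap x ∈ insert ⊥ (φ '' R) := by
    intro x
    rcases (φ '' R ∩ Iio x).eq_empty_or_nonempty with hemp | hne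
    · exact Or.inl (by simp [gap, hemp])
    · right
      have hcl : IsClosed (φ '' R) := (hR.image hφ).isClosed
      exact hcl.closure_subset_iff.2 inter_subset_left (sSup_mem_closure hne)
  have hgap_count : ∀ p, (φ '' {z ∈ Z | φ z ∉ φ '' R ∧ gap (φ z) = p}).Countable := by
    intro p
    have hkey : ∀ x ∈ {z ∈ Z | φ z ∉ φ '' R ∧ gap (φ z) = p},
        ∀ y ∈ {z ∈ Z | φ z ∉ φ '' R ∧ gap (φ z) = p},
        {z ∈ Z | φ z ∉ φ '' R ∧ gap (φ z) = p} ∩ φ ⁻¹' Icc (φ x) (φ y) =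
          Z ∩ φ ⁻¹' Icc (φ x) (φ y) ∧ Disjoint (Z ∩ φ ⁻¹' Icc (φ x) (φ y)) R := by
      rintro x ⟨-, hxR, hxp⟩ y ⟨-, hyR, hyp⟩
      have hno : ∀ r ∈ φ '' R, r ∉ Icc (φ x) (φ y) := by
        rintro r hr ⟨hxr, hry⟩
        have h1 : r < φ y := lt_of_le_of_ne hry (by rintro rfl; exact hyR hr)
        have h2 : r ≤ gap (φ y) := le_sSup ⟨hr, h1⟩
        have h3 : gap (φ x) ≤ φ x := sSup_le fun s hs => hs.2.le
        have h4 : r = φ x := le_antisymm (by rw [hyp, ← hxp] at h2; exact h2.trans h3) hxr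
        exact hxR (h4 ▸ hr)
      refine ⟨Subset.antisymm (fun z hz => ⟨hz.1.1, hz.2⟩) fun z hz =>
        ⟨⟨hz.1, fun hzR => hno _ hzR hz.2, ?_⟩, hz.2⟩, ?_⟩
      · exact le_antisymm ((hgap_mono hz.2.2).trans hyp.le) (hxp.ge.trans (hgap_mono hz.2.1))
      · exact disjoint_left.2 fun z hz hzR => hno _ ⟨z, hzR, rfl⟩ hz.2
    have hclosed : ∀ x y, IsCompact (Z ∩ φ ⁻¹' Icc (φ x) (φ y)) := fun x y =>
      hZ.inter_right (isClosed_Icc.preimage hφ)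
    refine h.countable_image_of_Icc hφ (fun x hx y hy => ?_) fun x hx y hy => ?_
    · rw [(hkey x hx y hy).1]
      exact hclosed x y
    · rw [(hkey x hx y hy).1]
      exact hdisj _ inter_subset_left (hclosed x y) (hkey x hx y hy).2
  refine (hRcount.union ((hRcount.insert ⊥).biUnion fun p _ => hgap_count p)).mono ?_
  rintro _ ⟨z, hz, rfl⟩
  by_cases hzR : φ z ∈ φ '' R
  · exact Or.inl hzR
  · exact Or.inr (mem_biUnion (hgap_mem (φ z)) ⟨z, ⟨hz, hzR, rfl⟩, rfl⟩)

theorem IsSigmaLocallyConstant.countable_image_of_isCompact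
    (h : IsSigmaLocallyConstant φ C O) (hφ : Continuous φ) {S : Set A} (hS : IsCompact S) :
    (φ '' S).Countable := by
  by_contra hunc
  obtain ⟨n, E, ⟨hEcomp, hEunc⟩, hE⟩ := exists_good_forall_inter_nonempty
    (fun n => C n ∩ O n) (fun E => IsCompact E ∧ ¬ (φ '' E).Countable) S ⟨hS, hunc⟩ (by
    intro E hanti hE
    obtain ⟨t, ht⟩ := IsCompact.nonempty_iInter_of_sequence_nonempty_isCompact_isClosed E
      (fun n => hanti n.le_succ)
      (fun n => by
        by_contra hemp
        exact (hE n).2 (by simp [not_nonempty_iff_eq_empty.1 hemp]))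
      (hE 0).1 (fun n => (hE n).1.isClosed)
    obtain ⟨n, hn⟩ := h.exists_mem t
    exact ⟨t, n, mem_iInter.1 ht, hn⟩)
  have hsmall : ∀ Y ⊆ E, IsCompact Y → Disjoint Y (C n ∩ O n) → (φ '' Y).Countable := by
    intro Y hYE hY hYdisj
    by_contra hcon
    obtain ⟨t, htY, ht⟩ := hE Y hYE ⟨hY, hcon⟩
    exact disjoint_left.1 hYdisj htY ht
  have hEC : IsCompact (E ∩ C n) := hEcomp.inter_right (h.isClosed n)
  have hECO : IsCompact (E ∩ C n ∩ (O n)ᶜ) := hEC.inter_right (h.isOpen n).isClosed_compl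
  have hcount : (φ '' (E ∩ C n)).Countable := by
    refine h.countable_image_of_disjoint hφ hEC hECO (hsmall _
      (inter_subset_left.trans inter_subset_left) hECO
      (disjoint_left.2 fun t ht ht' => ht.2 ht'.2)) fun Y hYE hY hYdisj => ?_
    refine (h.finite_image hY (n := n) fun t ht => ⟨(hYE ht).2, ?_⟩).countable
    by_contra htO
    exact disjoint_left.1 hYdisj ht ⟨hYE ht, htO⟩
  refine hEunc (h.countable_image_of_disjoint hφ hEcomp hEC hcount fun Y hYE hY hYdisj => ?_)
  exact hsmall Y hYE hY (disjoint_left.2 fun t ht ht' => disjoint_left.1 hYdisj ht ⟨hYE ht, ht'.1⟩)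

end LinearOrderValued

section Prec

variable {K : Type*} [TopologicalSpace K]

theorem Prec.eq_of_ne_zero {f g : C(K, ℝ)} (h : Prec f g) {t : K} (ht : f t ≠ 0) : f t = g t :=
  h.2 t (subset_closure ht)

theorem Prec.asymm {f g : C(K, ℝ)} (h : Prec f g) : ¬ Prec g f := by
  intro h'
  refine h.1 (ContinuousMap.ext fun t => ?_)
  by_cases hf : f t = 0
  · by_cases hg : g t = 0
    · rw [hf, hg]
    · exact (h'.eq_of_ne_zero hg).symm
  · exact h.eq_of_ne_zero hf

theorem Prec.trans {f g k : C(K, ℝ)} (h : Prec f g) (h' : Prec g k) : Prec f k := by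
  refine ⟨fun hfk => h.asymm (hfk ▸ h'), fun t ht => ?_⟩
  have hsub : {t | f t ≠ 0} ⊆ {t | g t ≠ 0} := fun s hs => by
    rw [mem_ofPred_eq, ← h.eq_of_ne_zero hs]
    exact hs
  rw [h.2 t ht, h'.2 t (closure_mono hsub ht)]

/-- The linear order induced by `≺` on the indices of a family of pairwise comparable
functions. -/
noncomputable abbrev precLinearOrder {ι : Type*} (F : ι → C(K, ℝ))
    (hF : ∀ i j, i ≠ j → Prec (F i) (F j) ∨ Prec (F j) (F i)) : LinearOrder ι where
  le i j := i = j ∨ Prec (F i) (F j)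
  le_refl i := Or.inl rfl
  le_trans i j k hij hjk := by
    rcases hij with rfl | hij
    · exact hjk
    rcases hjk with rfl | hjk
    · exact Or.inr hij
    · exact Or.inr (hij.trans hjk)
  le_antisymm i j hij hji := by
    rcases hij with rfl | hij
    · rfl
    rcases hji with rfl | hji
    · rfl
    · exact absurd hji hij.asymm
  le_total i j := by
    by_cases hij : i = j
    · exact Or.inl (Or.inl hij)
    · exact (hF i j hij).imp Or.inr Or.inr
  toDecidableLE := Classical.decRel _

end Prec

section IndexedChain

variable {K : Type*} [TopologicalSpace K] {ι : Type*} [LinearOrder ι] {F : ι → C(K, ℝ)}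

theorem apply_eq_of_le (hF : ∀ i j, i < j → Prec (F i) (F j)) {i j : ι} (hij : i ≤ j) {t : K}
    (ht : F i t ≠ 0) : F i t = F j t := by
  rcases hij.eq_or_lt with rfl | hlt
  · rfl
  · exact (hF i j hlt).eq_of_ne_zero ht

theorem apply_eq_of_ne_zero (hF : ∀ i j, i < j → Prec (F i) (F j)) {i j : ι} {t : K}
    (hi : F i t ≠ 0) (hj : F j t ≠ 0) : F i t = F j t := by
  rcases le_total i j with h | h
  · exact apply_eq_of_le hF h hi
  · exact (apply_eq_of_le hF h hj).symm

theorem eventually_apply_eq_zero (hF : ∀ i j, i < j → Prec (F i) (F j)) {i j : ι} {t : K}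
    (hi : F i t = 0) (hj : F j t ≠ 0) : ∀ᶠ s in 𝓝 t, F i s = 0 := by
  have hij : i < j := by
    by_contra hle
    exact hj (by rw [apply_eq_of_le hF (not_lt.1 hle) hj, hi])
  have hmem : t ∉ closure {s | F i s ≠ 0} := fun h => hj (by rw [← (hF i j hij).2 t h, hi])
  filter_upwards [isClosed_closure.isOpen_compl.mem_nhds hmem] with s hs
  by_contra hne
  exact hs (subset_closure hne)

/-- The lower set of indices at which the chain has not yet become nonzero at `t`. -/
def zeroCut (F : ι → C(K, ℝ)) (hF : ∀ i j, i < j → Prec (F i) (F j)) (t : K) : LowerSet ι where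
  carrier := {i | F i t = 0}
  lower' := by
    intro j i hij hj
    by_contra hi
    exact hi ((apply_eq_of_le hF hij hi).trans hj)

theorem mem_zeroCut {hF : ∀ i j, i < j → Prec (F i) (F j)} {t : K} {i : ι} :
    i ∈ zeroCut F hF t ↔ F i t = 0 := Iff.rfl

/-- The points at which two members of the chain are at least `δ` apart. -/
def jumpSet (F : ι → C(K, ℝ)) (δ : ℝ) : Set K := {t | ∃ i j, δ ≤ |F i t - F j t|}

theorem exists_of_mem_jumpSet (hF : ∀ i j, i < j → Prec (F i) (F j)) {δ : ℝ} (hδ : 0 < δ) {t : K}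
    (ht : t ∈ jumpSet F δ) : ∃ i j, F i t = 0 ∧ δ ≤ |F j t| := by
  obtain ⟨i, j, hij⟩ := ht
  by_cases hi : F i t = 0
  · exact ⟨i, j, hi, by simpa [hi] using hij⟩
  by_cases hj : F j t = 0
  · exact ⟨j, i, hj, by simpa [hj] using hij⟩
  rw [apply_eq_of_ne_zero hF hi hj, sub_self, abs_zero] at hij
  exact absurd hδ hij.not_gt

theorem LowerSet.lt_iff_exists_mem_notMem {ι : Type*} [LinearOrder ι] {a b : LowerSet ι} :
    a < b ↔ ∃ i ∈ b, i ∉ a := by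
  rw [← not_le, ← LowerSet.coe_subset_coe, not_subset]
  rfl

theorem zeroCut_continuous [TopologicalSpace (LowerSet ι)] [OrderTopology (LowerSet ι)]
    (hF : ∀ i j, i < j → Prec (F i) (F j)) {δ : ℝ} (hδ : 0 < δ) :
    Continuous fun t : jumpSet F δ => zeroCut F hF t := by
  have happly : ∀ i, Continuous fun t : jumpSet F δ => F i t :=
    fun i => (F i).continuous.comp continuous_subtype_val
  refine OrderTopology.continuous_iff.2 fun a => ⟨?_, ?_⟩
  · rw [isOpen_iff_mem_nhds]
    intro t ht
    obtain ⟨i, hi, hia⟩ := LowerSet.lt_iff_exists_mem_notMem.1 ht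
    obtain ⟨-, j, -, hj⟩ := exists_of_mem_jumpSet hF hδ t.2
    have hj0 : F j t ≠ 0 := abs_pos.1 (hδ.trans_le hj)
    filter_upwards [continuous_subtype_val.continuousAt.eventually
      (eventually_apply_eq_zero hF hi hj0)] with s hs
    exact LowerSet.lt_iff_exists_mem_notMem.2 ⟨i, hs, hia⟩
  · rw [isOpen_iff_mem_nhds]
    intro t ht
    obtain ⟨i, hia, hi⟩ := LowerSet.lt_iff_exists_mem_notMem.1 ht
    filter_upwards [(happly i).continuousAt.eventually_ne hi] with s hs
    exact LowerSet.lt_iff_exists_mem_notMem.2 ⟨i, hia, hs⟩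

theorem zeroCut_eq_of_isPreconnected (hF : ∀ i j, i < j → Prec (F i) (F j)) {V : Set K}
    (hV : IsPreconnected V) {j : ι} (hj : ∀ s ∈ V, F j s ≠ 0) {s t : K} (hs : s ∈ V) (ht : t ∈ V) :
    zeroCut F hF s = zeroCut F hF t := by
  have key : ∀ i, ∀ s ∈ V, ∀ t ∈ V, F i s = 0 → F i t = 0 := by
    intro i s hs t ht his
    by_contra hit
    obtain ⟨u, huV, hu0, hu⟩ := hV (interior {u | F i u = 0}) {u | F i u ≠ 0} isOpen_interior
      (isOpen_ne_fun (F i).continuous continuous_const) (fun u hu => by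
        by_cases hiu : F i u = 0
        · exact Or.inl (mem_interior_iff_mem_nhds.2 (eventually_apply_eq_zero hF hiu (hj u hu)))
        · exact Or.inr hiu)
      ⟨s, hs, mem_interior_iff_mem_nhds.2 (eventually_apply_eq_zero hF his (hj s hs))⟩
      ⟨t, ht, hit⟩
    exact hu (interior_subset hu0 : u ∈ {u | F i u = 0})
  exact SetLike.ext fun i => ⟨key i s hs t ht, key i t ht s hs⟩

variable [CompactSpace K]

theorem isCompact_zeroCut_preimage_Icc [TopologicalSpace (LowerSet ι)]
    [OrderTopology (LowerSet ι)] (hF : ∀ i j, i < j → Prec (F i) (F j)) {δ : ℝ} (hδ : 0 < δ)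
    (x y : jumpSet F δ) :
    IsCompact ((fun t : jumpSet F δ => zeroCut F hF t) ⁻¹'
      Icc (zeroCut F hF x) (zeroCut F hF y)) := by
  obtain ⟨i, -, hi, -⟩ := exists_of_mem_jumpSet hF hδ x.2
  obtain ⟨-, j, -, hj⟩ := exists_of_mem_jumpSet hF hδ y.2
  have hj0 : F j y ≠ 0 := abs_pos.1 (hδ.trans_le hj)
  have hB : IsCompact ((↑) ⁻¹' {t | δ ≤ |F i t - F j t|} : Set (jumpSet F δ)) := by
    have hcl : IsClosed {t | δ ≤ |F i t - F j t|} :=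
      isClosed_le continuous_const ((F i).continuous.sub (F j).continuous).abs
    refine IsEmbedding.subtypeVal.isInducing.isCompact_preimage' hcl.isCompact ?_
    rw [Subtype.range_coe]
    exact fun t ht => ⟨i, j, ht⟩
  refine hB.of_isClosed_subset (isClosed_Icc.preimage (zeroCut_continuous hF hδ)) ?_
  rintro t ⟨hxt, hty⟩
  have hit : F i t = 0 := hxt hi
  have hjt : F j t ≠ 0 := fun h => hj0 (hty h)
  obtain ⟨-, k, -, hk⟩ := exists_of_mem_jumpSet hF hδ t.2
  have hk0 : F k t ≠ 0 := abs_pos.1 (hδ.trans_le hk)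
  rw [mem_preimage, mem_ofPred_eq, hit, zero_sub, abs_neg, apply_eq_of_ne_zero hF hjt hk0]
  exact hk

theorem exists_zeroCut_eq_Iic {δ : ℝ} (hδ : 0 < δ) (hF : ∀ i j, i < j → Prec (F i) (F j))
    (hnorm : ∀ i j, i < j → δ ≤ ‖F i - F j‖) {i j : ι} (hij : i < j) :
    ∃ t ∈ jumpSet F δ, zeroCut F hF t = LowerSet.Iic i := by
  let B : Ioi i → Set K := fun k => {t | δ ≤ |F i t - F k t|}
  have hB : ∀ k t, t ∈ B k → F i t = 0 ∧ F k t ≠ 0 := by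
    intro k t ht
    have hne : F i t ≠ F k t := by
      intro h
      rw [mem_ofPred_eq, h, sub_self, abs_zero] at ht
      exact absurd hδ ht.not_gt
    have hi : F i t = 0 := by
      by_contra hi
      exact hne (apply_eq_of_le hF (le_of_lt k.2) hi)
    exact ⟨hi, fun hk => hne (by rw [hi, hk])⟩
  have hmono : Monotone B := by
    intro k l hkl t ht
    have hkl' : F k t = F l t := apply_eq_of_le hF hkl (hB k t ht).2
    simpa only [B, mem_ofPred_eq, hkl'] using ht
  have hcl : ∀ k, IsClosed (B k) := fun k =>
    isClosed_le continuous_const ((F i).continuous.sub (F k).continuous).abs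
  have : Nonempty (Ioi i) := ⟨⟨j, hij⟩⟩
  obtain ⟨t, ht⟩ := IsCompact.nonempty_iInter_of_directed_nonempty_isCompact_isClosed B
    (hmono.directed_ge) (fun k => by
      by_contra hemp
      refine (hnorm i k k.2).not_gt ((ContinuousMap.norm_lt_iff _ hδ).2 fun t => ?_)
      by_contra hle
      exact hemp ⟨t, not_lt.1 hle⟩)
    (fun k => (hcl k).isCompact) hcl
  rw [mem_iInter] at ht
  refine ⟨t, ⟨i, j, ht ⟨j, hij⟩⟩, SetLike.ext fun k => ?_⟩
  rw [mem_zeroCut, LowerSet.mem_Iic_iff]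
  constructor
  · intro hk
    by_contra hki
    exact (hB ⟨k, not_le.1 hki⟩ t (ht _)).2 hk
  · intro hki
    by_contra hk
    exact hk (by rw [apply_eq_of_le hF hki hk, (hB ⟨j, hij⟩ t (ht _)).1])

theorem countable_of_chain_close_on [T2Space K] {M : Set K} {H : ℕ → Set K}
    (hcover : Mᶜ = ⋃ n, H n)
    (hopen : ∀ n, ∃ U : Set K, IsOpen U ∧ H n = U ∩ closure (H n))
    (hconn : ∀ n, ∀ t, ∀ ht : t ∈ H n, HasConnBase (closure (H n)) t (subset_closure ht))
    {δ : ℝ} (hδ : 0 < δ) (hF : ∀ i j, i < j → Prec (F i) (F j))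
    (hnorm : ∀ i j, i < j → δ ≤ ‖F i - F j‖)
    (hclose : ∀ i j, ∀ t ∈ M, |F i t - F j t| < δ) : Countable ι := by
  let _ : TopologicalSpace (LowerSet ι) := Preorder.topology _
  have : OrderTopology (LowerSet ι) := ⟨rfl⟩
  choose U hU hHU using hopen
  have hcont := zeroCut_continuous hF hδ
  have hloc : IsSigmaLocallyConstant (fun t : jumpSet F δ => zeroCut F hF t)
      (fun n => (↑) ⁻¹' closure (H n)) (fun n => (↑) ⁻¹' U n) := by
    refine ⟨fun n => isClosed_closure.preimage continuous_subtype_val,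
      fun n => (hU n).preimage continuous_subtype_val, fun t => ?_, ?_⟩
    · have htM : (t : K) ∈ Mᶜ := fun htM => by
        obtain ⟨i, j, hij⟩ := t.2
        exact hij.not_gt (hclose i j t htM)
      rw [hcover, mem_iUnion] at htM
      obtain ⟨n, hn⟩ := htM
      exact ⟨n, subset_closure hn, (hHU n ▸ hn : (t : K) ∈ U n ∩ closure (H n)).1⟩
    · rintro n t ⟨htC, htU⟩
      have htH : (t : K) ∈ H n := by
        rw [hHU n]
        exact ⟨htU, htC⟩
      obtain ⟨-, j, -, hj⟩ := exists_of_mem_jumpSet hF hδ t.2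
      have hj0 : F j t ≠ 0 := abs_pos.1 (hδ.trans_le hj)
      obtain ⟨V, hVopen, hVconn, htV, hVsub⟩ := hconn n t htH {s | F j s ≠ 0}
        (isOpen_ne_fun ((F j).continuous.comp continuous_subtype_val) continuous_const) hj0
      obtain ⟨W, hW, rfl⟩ := isOpen_induced_iff.1 hVopen
      have hWt : (↑) ⁻¹' W ∈ 𝓝 t := (hW.preimage continuous_subtype_val).mem_nhds htV
      filter_upwards [mem_nhdsWithin_of_mem_nhds hWt, self_mem_nhdsWithin] with s hsW hsC
      refine zeroCut_eq_of_isPreconnected hF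
        (hVconn.isPreconnected.image _ continuous_subtype_val.continuousOn) (j := j) ?_
        ⟨⟨s, hsC⟩, hsW, rfl⟩ ⟨⟨t, htC⟩, htV, rfl⟩
      rintro _ ⟨s, hs, rfl⟩
      exact hVsub hs
  have hrange : ((fun t : jumpSet F δ => zeroCut F hF t) '' univ).Countable := by
    refine hloc.countable_image_of_Icc hcont (fun x _ y _ => ?_) fun x _ y _ => ?_
    · rw [univ_inter]
      exact isCompact_zeroCut_preimage_Icc hF hδ x y
    · rw [univ_inter]
      exact hloc.countable_image_of_isCompact hcont (isCompact_zeroCut_preimage_Icc hF hδ x y)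
  have hmax : {i : ι | ∀ j, j ≤ i}.Countable :=
    Subsingleton.countable fun i hi j hj => le_antisymm (hj i) (hi j)
  have hnonmax : {i : ι | ¬ ∀ j, j ≤ i}.Countable := by
    refine (hrange.preimage_of_injOn (f := LowerSet.Iic) ?_).mono ?_
    · exact fun i _ k _ hik => LowerSet.Iic_inj.1 hik
    · intro i hi
      simp only [mem_ofPred_eq, not_forall, not_le] at hi
      obtain ⟨j, hij⟩ := hi
      obtain ⟨t, ht, hti⟩ := exists_zeroCut_eq_Iic hδ hF hnorm hij
      exact ⟨⟨t, ht⟩, trivial, hti⟩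
  refine countable_univ_iff.1 ((hmax.union hnonmax).mono fun i _ => ?_)
  exact em _

end IndexedChain

theorem countable_of_pairwise_precDelta {K : Type*} [TopologicalSpace K] [CompactSpace K]
    [T2Space K] {M : Set K} {H : ℕ → Set K} (hcover : Mᶜ = ⋃ n, H n)
    (hopen : ∀ n, ∃ U : Set K, IsOpen U ∧ H n = U ∩ closure (H n))
    (hconn : ∀ n, ∀ t, ∀ ht : t ∈ H n, HasConnBase (closure (H n)) t (subset_closure ht))
    {δ : ℝ} (hδ : 0 < δ) {ι : Type*} {F : ι → C(K, ℝ)}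
    (hF : ∀ i j, i ≠ j → PrecDelta δ (F i) (F j) ∨ PrecDelta δ (F j) (F i))
    (hclose : ∀ i j, ∀ t ∈ M, |F i t - F j t| < δ) : Countable ι := by
  let _ : LinearOrder ι := precLinearOrder F fun i j hij => (hF i j hij).imp And.left And.left
  have hlt : ∀ i j, i < j → PrecDelta δ (F i) (F j) := by
    intro i j hij
    have hprec : Prec (F i) (F j) := hij.le.resolve_left hij.ne
    exact (hF i j hij.ne).resolve_right fun h => hprec.asymm h.1
  exact countable_of_chain_close_on hcover hopen hconn hδ (fun i j h => (hlt i j h).1)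
    (fun i j h => (hlt i j h).2) hclose

theorem Prec.restrict {K : Type*} [TopologicalSpace K] {f g : C(K, ℝ)} (h : Prec f g) {M : Set K}
    (hne : f.restrict M ≠ g.restrict M) : Prec (f.restrict M) (g.restrict M) := by
  refine ⟨hne, fun t ht => h.2 t ?_⟩
  exact map_mem_closure continuous_subtype_val ht fun s hs => hs

/-- Being `δ`-close on `M` is transitive on chains: at each point, all nonzero values of the
members of a chain agree. -/
theorem IsPrecChain.close_trans {K : Type*} [TopologicalSpace K] [CompactSpace K] {δ : ℝ}
    {F : Set C(K, ℝ)} (hF : IsPrecChain δ F) {f g k : C(K, ℝ)} (hf : f ∈ F)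
    (hg : g ∈ F) (hk : k ∈ F) {t : K} (hfg : |f t - g t| < δ) (hgk : |g t - k t| < δ) :
    |f t - k t| < δ := by
  have hval : ∀ f ∈ F, ∀ g ∈ F, f t ≠ 0 → g t ≠ 0 → f t = g t := by
    intro f hf g hg hft hgt
    by_cases hfg : f = g
    · rw [hfg]
    rcases hF f hf g hg hfg with h | h
    · exact h.1.eq_of_ne_zero hft
    · exact (h.1.eq_of_ne_zero hgt).symm
  by_cases hgt : g t = 0
  · by_cases hft : f t = 0
    · rwa [hft, ← hgt]
    by_cases hkt : k t = 0
    · rwa [hkt, ← hgt]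
    · rw [hval f hf k hk hft hkt, sub_self, abs_zero]
      exact (abs_nonneg _).trans_lt hfg
  · by_cases hft : f t = 0
    · by_cases hkt : k t = 0
      · rw [hft, hkt, sub_self, abs_zero]
        exact (abs_nonneg _).trans_lt hfg
      · rwa [← hval g hg k hk hgt hkt]
    · rwa [hval f hf g hg hft hgt]

/-- **Theorem 3.6 (2).** Let `M ⊆ K` be closed with `K ∖ M = ⋃ₙ Hₙ`, each `Hₙ` open in
its closure and each point of `Hₙ` having a local base of connected sets relative to
`cl(Hₙ)`. If `M` has the Bishop property (B), then so does `K`. -/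
theorem stmt8 {K : Type*} [TopologicalSpace K] [CompactSpace K] [T2Space K]
    (M : Set K) (hM : IsClosed M) (H : ℕ → Set K) (hcover : Mᶜ = ⋃ n, H n)
    (hopen : ∀ n, ∃ U : Set K, IsOpen U ∧ H n = U ∩ closure (H n))
    (hconn : ∀ n, ∀ t, ∀ ht : t ∈ H n, HasConnBase (closure (H n)) t (subset_closure ht))
    (hMB : @HasBishop ↥M _ (isCompact_iff_compactSpace.mp hM.isCompact) inferInstance) :
    HasBishop K := by
  have : CompactSpace M := isCompact_iff_compactSpace.mp hM.isCompact
  intro δ hδ F hF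
  let close : Setoid F :=
    { r := fun f g => ∀ t ∈ M, |(f : C(K, ℝ)) t - (g : C(K, ℝ)) t| < δ
      iseqv := ⟨fun f t _ => by simpa using hδ, fun h t ht => by
        rw [abs_sub_comm]
        exact h t ht, fun {f g k} h h' t ht =>
        hF.close_trans f.2 g.2 k.2 (h t ht) (h' t ht)⟩ }
  let rep : Quotient close → C(M, ℝ) := fun q => (q.out : C(K, ℝ)).restrict M
  have hrep : ∀ q q', q ≠ q' → δ ≤ ‖rep q - rep q'‖ := by
    intro q q' hne
    by_contra hlt
    refine hne ((Quotient.out_equiv_out (s := close)).1 fun t ht => ?_)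
    exact ((rep q - rep q').norm_coe_le_norm ⟨t, ht⟩).trans_lt (not_le.1 hlt)
  have hinj : Function.Injective rep := by
    intro q q' heq
    by_contra hne
    have := hrep q q' hne
    rw [heq, sub_self, norm_zero] at this
    exact this.not_gt hδ
  have hchain : IsPrecChain δ (range rep) := by
    rintro _ ⟨q, rfl⟩ _ ⟨q', rfl⟩ hne
    have hqq' : q ≠ q' := fun h => hne (h ▸ rfl)
    rcases hF q.out q.out.2 q'.out q'.out.2
      (fun h => hne (congrArg (ContinuousMap.restrict M) h)) with h | h
    · exact Or.inl ⟨h.1.restrict hne, hrep q q' hqq'⟩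
    · exact Or.inr ⟨h.1.restrict hne.symm, hrep q' q hqq'.symm⟩
  have hquot : Countable (Quotient close) := by
    have : Countable (range rep) := (hMB δ hδ (range rep) hchain).to_subtype
    exact (rangeFactorization_injective.2 hinj).countable
  have hclass : ∀ q : Quotient close,
      {f : C(K, ℝ) | ∃ hf : f ∈ F, (⟦⟨f, hf⟩⟧ : Quotient close) = q}.Countable := by
    intro q
    let G : Set C(K, ℝ) := {f | ∃ hf : f ∈ F, (⟦⟨f, hf⟩⟧ : Quotient close) = q}
    have hGF : G ⊆ F := fun f hf => hf.1
    have hG : ∀ f ∈ G, ∀ g ∈ G, f ≠ g → PrecDelta δ f g ∨ PrecDelta δ g f :=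
      fun f hf g hg => hF f (hGF hf) g (hGF hg)
    refine countable_coe_iff.1 (countable_of_pairwise_precDelta
      (F := fun f : G => (f : C(K, ℝ))) hcover hopen hconn hδ
      (fun f g h => hG f f.2 g g.2 fun h' => h (Subtype.ext h')) ?_)
    rintro ⟨f, hf, hfq⟩ ⟨g, hg, hgq⟩
    exact Quotient.exact (hfq.trans hgq.symm)
  refine (countable_iUnion hclass).mono fun f hf => ?_
  exact mem_iUnion.2 ⟨⟦⟨f, hf⟩⟧, hf, rfl⟩
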